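/- Under the counting axiom, the generalized Mertens theorem holds: the sum over prime elements 𝔭 with N(𝔭) ≤ x of 1/N(𝔭) equals log log x + A + O(1/log x) for some constant A depending only on P. -/

import Mathlib

/-!
Write `M(y)` for the number of elements of norm at most `y`. Summing the logarithmic identity
`log N(m) = ∑ log N(p)`, over pairs `(p, k)` with `k ≥ 1` and `p ^ k ∣ m`, gives
`T(x) := ∑_{N(m) ≤ x} log N(m) = ∑_q w(q) M(x / N(q))`, where `q` runs over the prime powers
`q = p ^ k` and `w(q) = log N(p)` (`sum_log_mnorm`). The counting axiom yields
`T(x) = κ x log x + O(x)` (`sum_log_asymp`) and `M(y) = κ y + O(y ^ θ)`, so Mertens' first theorem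
`∑_{N(q) ≤ x} w(q) / N(q) = log x + O(1)` follows once `∑_{N(q) ≤ x} w(q) (x / N(q)) ^ θ = O(x)`.

This last bound, which contains Chebyshev's `∑_{N(q) ≤ x} w(q) = O(x)`, is the crux, since the
combination `M(y) - 2 M(y / 2)` used for the integers need not be nonnegative here. Take instead
`g(y) = ∑_{j ≥ 0} (2ρ) ^ j (M(y / 2 ^ j) - 2 M(y / 2 ^ (j + 1)))
      = M(y) - ∑_{j ≥ 0} (1 - ρ) ρ ^ j 2 ^ (j + 1) M(y / 2 ^ (j + 1))`
with `ρ < 1` close to `1`. Only the terms with `2 ^ (j + 1) ≤ y` count, so the main terms `κ y` do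
not quite cancel: about `κ y ρ ^ L` is left when `2 ^ L ≤ y < 2 ^ (L + 1)`. For `ρ` close to `1` this
dominates the error terms when `y` is large, while for small `y` the subtracted sum is negligible
against `M(y) ≥ 1`. Hence `g(y) ≥ c y ^ θ` for all `y ≥ 1` (`exists_positive_kernel`). On the other
hand `∑_q w(q) g(x / N(q)) = ∑_j (2ρ) ^ j (T(x / 2 ^ j) - 2 T(x / 2 ^ (j + 1)))`, which is
`O(∑_j ρ ^ j x) = O(x)`; this proves the bound (`mertens_first`).

Proper prime powers contribute `O(1)` by Chebyshev's bound (`primes_of_prime_powers`), and a discrete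
partial summation turns `∑_{N(p) ≤ x} log N(p) / N(p) = log x + O(1)` into the asserted formula
(`mertens_second`).
-/

open Filter

/-- The norm of an element of the free abelian monoid on `P`. -/
def mnorm {P : Type*} (N : P → ℕ) (m : P →₀ ℕ) : ℕ :=
  m.prod fun p k => N p ^ k

/-! ### Mertens' first theorem for prime powers -/

/-- Two forms of the kernel `g` built from `M`; the last term vanishes once `y < 2 ^ J` for the
functions of interest. -/
lemma telescope_identity (M : ℝ → ℝ) (ρ y : ℝ) (J : ℕ) :
    M y - ∑ j ∈ Finset.range J, (1 - ρ) * ρ ^ j * 2 ^ (j + 1) * M (y / 2 ^ (j + 1)) =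
      (∑ j ∈ Finset.range J, (2 * ρ) ^ j * (M (y / 2 ^ j) - 2 * M (y / 2 ^ (j + 1))))
        + (2 * ρ) ^ J * M (y / 2 ^ J) := by
  induction J with
  | zero => simp
  | succ J ih =>
    rw [Finset.sum_range_succ, Finset.sum_range_succ, ← sub_sub, ih]
    simp only [mul_pow, pow_succ]
    ring

/-- A single small parameter meeting all the requirements of `exists_positive_kernel`. -/
lemma exists_small (a b c : ℝ) (ha : 0 < a) (hb : 0 ≤ b) (hc : 0 ≤ c) :
    ∃ ε : ℝ, 0 < ε ∧ ε ≤ 1 / 2 ∧ ε ≤ a ∧ ε * b ≤ 1 / 2 ∧ ε * c ≤ a := by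
  refine ⟨min (1 / 2) (min a (min (1 / (2 * (b + 1))) (a / (c + 1)))), ?_, ?_, ?_, ?_, ?_⟩
  · positivity
  · exact min_le_left _ _
  · exact (min_le_right _ _).trans (min_le_left _ _)
  · have h : min (1 / 2) (min a (min (1 / (2 * (b + 1))) (a / (c + 1)))) ≤ 1 / (2 * (b + 1)) :=
      (min_le_right _ _).trans ((min_le_right _ _).trans (min_le_left _ _))
    refine (mul_le_mul_of_nonneg_right h hb).trans ?_
    rw [div_mul_eq_mul_div, div_le_div_iff₀ (by positivity) (by positivity)]
    linarith
  · have h : min (1 / 2) (min a (min (1 / (2 * (b + 1))) (a / (c + 1)))) ≤ a / (c + 1) :=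
      (min_le_right _ _).trans ((min_le_right _ _).trans (min_le_right _ _))
    refine (mul_le_mul_of_nonneg_right h hc).trans ?_
    rw [div_mul_eq_mul_div, div_le_iff₀ (by positivity)]
    nlinarith

/-- For a suitable `ρ < 1` the geometric combination of dyadic dilates of `M` stays above a multiple
of `y ^ θ`, although `M(y) - 2 M(y / 2)` may change sign. -/
lemma exists_positive_kernel (M : ℝ → ℝ) (κ θ C : ℝ) (hκ : 0 < κ) (hθ1 : θ < 1)
    (hC : 0 ≤ C) (hmono : Monotone M) (hM0 : ∀ y < 1, M y = 0) (hM1 : ∀ y, 1 ≤ y → 1 ≤ M y)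
    (hM : ∀ y, 1 ≤ y → |M y - κ * y| ≤ C * y ^ θ) :
    ∃ ρ c : ℝ, 0 < ρ ∧ ρ < 1 ∧ 0 < c ∧ ∀ y, 1 ≤ y → ∀ J : ℕ, y < 2 ^ J →
      c * y ^ θ ≤
        M y - ∑ j ∈ Finset.range J, (1 - ρ) * ρ ^ j * 2 ^ (j + 1) * M (y / 2 ^ (j + 1)) := by
  -- `s ^ 2` is the growth rate of the error terms over the scales; `ρ * s ≥ 1` keeps `ρ * s ^ 2`
  -- above `s > 1`
  set s : ℝ := 2 ^ ((1 - θ) / 2) with hs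
  have hs1 : 1 < s := Real.one_lt_rpow (by norm_num) (by linarith)
  have hs0 : 0 < s := by linarith
  have hq : (2 : ℝ) ^ (1 - θ) = s ^ 2 := by
    rw [hs, ← Real.rpow_natCast, ← Real.rpow_mul (by norm_num)]
    congr 1; push_cast; ring
  obtain ⟨L₀, hL₀⟩ := pow_unbounded_of_one_lt (4 * C / κ) hs1
  obtain ⟨ε, hε0, hε2, hεa, hεb, hεc⟩ := exists_small (min (1 - 1 / s) (κ / 4))
    (L₀ * 2 ^ L₀) (C * s ^ 2 / (s - 1))
    (lt_min (by rw [sub_pos, div_lt_one hs0]; exact hs1) (by positivity)) (by positivity)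
    (div_nonneg (by positivity) (by linarith))
  have hρ0 : 0 < 1 - ε := by linarith
  have hρs : 1 ≤ (1 - ε) * s := by
    have h := hεa.trans (min_le_left _ _)
    have h2 : 1 / s ≤ 1 - ε := by linarith
    rwa [div_le_iff₀ hs0] at h2
  have hρq : s ≤ (1 - ε) * s ^ 2 := by nlinarith
  have hεc' : ε * (C * s ^ 2 / (s - 1)) ≤ κ / 4 := hεc.trans (min_le_right _ _)
  refine ⟨1 - ε, min (κ / 2) (1 / 2 / 2 ^ L₀), hρ0, by linarith, by positivity, ?_⟩
  intro y hy J hJ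
  have hy0 : 0 < y := by linarith
  obtain ⟨L, hL1, hL2⟩ := exists_nat_pow_near hy (one_lt_two (α := ℝ))
  have hLJ : L < J := (pow_lt_pow_iff_right₀ (one_lt_two (α := ℝ))).1 (hL1.trans_lt hJ)
  -- only the scales `2 ^ (j + 1) ≤ y` contribute
  have hsum : ∑ j ∈ Finset.range J,
      (1 - (1 - ε)) * (1 - ε) ^ j * 2 ^ (j + 1) * M (y / 2 ^ (j + 1)) =
      ∑ j ∈ Finset.range L,
        (1 - (1 - ε)) * (1 - ε) ^ j * 2 ^ (j + 1) * M (y / 2 ^ (j + 1)) := by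
    symm
    apply Finset.sum_subset (Finset.range_mono hLJ.le)
    intro j _ hj
    rw [Finset.mem_range, not_lt] at hj
    rw [hM0 _ _, mul_zero]
    rw [div_lt_one (by positivity)]
    exact hL2.trans_le (pow_le_pow_right₀ (by norm_num) (by omega))
  rw [hsum]
  have hε1 : 1 - (1 - ε) = ε := by ring
  rw [hε1]
  have hMy := hM1 y hy
  have hyθ : y ^ θ ≤ y := by
    simpa using Real.rpow_le_rpow_of_exponent_le hy hθ1.le
  have hyθ0 : 0 < y ^ θ := Real.rpow_pos_of_pos hy0 _
  rcases lt_or_ge L L₀ with hLL | hLL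
  · -- for bounded `y` the subtracted sum is at most `ε * L₀ * 2 ^ L₀ * M y ≤ M y / 2`
    have h1 : ∑ j ∈ Finset.range L, ε * (1 - ε) ^ j * 2 ^ (j + 1) * M (y / 2 ^ (j + 1)) ≤
        ∑ j ∈ Finset.range L, ε * 2 ^ L₀ * M y := by
      apply Finset.sum_le_sum
      intro j hj
      rw [Finset.mem_range] at hj
      have e1 : (1 - ε) ^ j ≤ 1 := pow_le_one₀ hρ0.le (by linarith)
      have e2 : (2 : ℝ) ^ (j + 1) ≤ 2 ^ L₀ := pow_le_pow_right₀ (by norm_num) (by omega)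
      have e3 : M (y / 2 ^ (j + 1)) ≤ M y :=
        hmono (div_le_self hy0.le (one_le_pow₀ (by norm_num)))
      have e4 : ε * (1 - ε) ^ j ≤ ε := by nlinarith
      have e5 : 0 ≤ ε * (1 - ε) ^ j := by positivity
      calc ε * (1 - ε) ^ j * 2 ^ (j + 1) * M (y / 2 ^ (j + 1))
          ≤ ε * (1 - ε) ^ j * 2 ^ (j + 1) * M y := by gcongr
        _ ≤ ε * 2 ^ L₀ * M y := by gcongr
    rw [Finset.sum_const, Finset.card_range, nsmul_eq_mul] at h1
    have h2 : (L : ℝ) * (ε * 2 ^ L₀ * M y) ≤ 1 / 2 * M y := by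
      have : (L : ℝ) ≤ L₀ := by exact_mod_cast hLL.le
      calc (L : ℝ) * (ε * 2 ^ L₀ * M y) ≤ L₀ * (ε * 2 ^ L₀ * M y) := by gcongr
        _ = ε * (L₀ * 2 ^ L₀) * M y := by ring
        _ ≤ _ := by gcongr
    have h3 : min (κ / 2) (1 / 2 / 2 ^ L₀) * y ^ θ ≤ 1 / 2 := by
      have hyL : y ^ θ ≤ 2 ^ L₀ :=
        hyθ.trans (hL2.le.trans (pow_le_pow_right₀ (by norm_num) (by omega)))
      calc min (κ / 2) (1 / 2 / 2 ^ L₀) * y ^ θ ≤ (1 / 2 / 2 ^ L₀) * 2 ^ L₀ := by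
            gcongr
            exact min_le_right _ _
        _ = 1 / 2 := by field_simp
    linarith
  · -- `y = y ^ θ * y ^ (1 - θ)` and `y ^ (1 - θ) ≥ (2 ^ L) ^ (1 - θ) = s ^ (2 * L)`
    have hyq : y ^ θ * (s ^ 2) ^ L ≤ y := by
      have h1 : (s ^ 2) ^ L ≤ y ^ (1 - θ) := by
        rw [← hq, ← Real.rpow_natCast, ← Real.rpow_mul (by norm_num), mul_comm,
          Real.rpow_mul (by norm_num), Real.rpow_natCast]
        exact Real.rpow_le_rpow (by positivity) hL1 (by linarith)
      calc y ^ θ * (s ^ 2) ^ L ≤ y ^ θ * y ^ (1 - θ) := by gcongr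
        _ = y := by rw [← Real.rpow_add hy0]; simp
    have hterm : ∀ j ∈ Finset.range L,
        ε * (1 - ε) ^ j * 2 ^ (j + 1) * M (y / 2 ^ (j + 1)) ≤
        κ * y * (ε * (1 - ε) ^ j) + ε * C * y ^ θ * s ^ 2 * ((1 - ε) * s ^ 2) ^ j := by
      intro j hj
      rw [Finset.mem_range] at hj
      have hz : 1 ≤ y / 2 ^ (j + 1) := by
        rw [one_le_div (by positivity)]
        exact (pow_le_pow_right₀ (by norm_num) (by omega)).trans hL1
      have h1 : M (y / 2 ^ (j + 1)) ≤ κ * (y / 2 ^ (j + 1)) + C * (y / 2 ^ (j + 1)) ^ θ := by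
        have := (abs_le.1 (hM _ hz)).2
        linarith
      have h2 : (2 : ℝ) ^ (j + 1) * (y / 2 ^ (j + 1)) ^ θ = y ^ θ * (s ^ 2) ^ (j + 1) := by
        rw [Real.div_rpow hy0.le (by positivity), ← hq, ← Real.rpow_natCast,
          ← Real.rpow_natCast, ← Real.rpow_mul (by norm_num), ← Real.rpow_mul (by norm_num),
          mul_div_assoc', mul_comm, mul_div_assoc, ← Real.rpow_sub (by norm_num)]
        congr 2
        ring
      calc ε * (1 - ε) ^ j * 2 ^ (j + 1) * M (y / 2 ^ (j + 1))
          ≤ ε * (1 - ε) ^ j * 2 ^ (j + 1) *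
            (κ * (y / 2 ^ (j + 1)) + C * (y / 2 ^ (j + 1)) ^ θ) := by gcongr
        _ = κ * (ε * (1 - ε) ^ j) * (2 ^ (j + 1) * (y / 2 ^ (j + 1))) +
            ε * C * (1 - ε) ^ j * (2 ^ (j + 1) * (y / 2 ^ (j + 1)) ^ θ) := by ring
        _ = _ := by
          rw [h2, mul_div_cancel₀ _ (by positivity), mul_pow, pow_succ (s ^ 2)]
          ring
    have hS := Finset.sum_le_sum hterm
    rw [Finset.sum_add_distrib, ← Finset.mul_sum, ← Finset.mul_sum, ← Finset.mul_sum] at hS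
    have hg1 : ε * ∑ j ∈ Finset.range L, (1 - ε) ^ j = 1 - (1 - ε) ^ L := by
      have := mul_neg_geom_sum (1 - ε) L
      rwa [hε1] at this
    have hg2 : ∑ j ∈ Finset.range L, ((1 - ε) * s ^ 2) ^ j ≤
        ((1 - ε) * s ^ 2) ^ L / (s - 1) := by
      rw [geom_sum_eq (by linarith)]
      apply div_le_div₀ (by positivity) (by linarith) (by linarith) (by linarith)
    rw [hg1] at hS
    have hρL : 0 < (1 - ε) ^ L := by positivity
    have hB : ε * C * y ^ θ * s ^ 2 * ∑ j ∈ Finset.range L, ((1 - ε) * s ^ 2) ^ j ≤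
        κ / 4 * ((1 - ε) ^ L * y) := by
      calc ε * C * y ^ θ * s ^ 2 * ∑ j ∈ Finset.range L, ((1 - ε) * s ^ 2) ^ j
          ≤ ε * C * y ^ θ * s ^ 2 * (((1 - ε) * s ^ 2) ^ L / (s - 1)) := by gcongr
        _ = ε * (C * s ^ 2 / (s - 1)) * ((1 - ε) ^ L * (y ^ θ * (s ^ 2) ^ L)) := by
          rw [mul_pow]; ring
        _ ≤ κ / 4 * ((1 - ε) ^ L * y) := by gcongr
    have hlow : s ^ L * y ^ θ ≤ (1 - ε) ^ L * y := by
      calc s ^ L * y ^ θ ≤ ((1 - ε) * s ^ 2) ^ L * y ^ θ := by gcongr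
        _ = (1 - ε) ^ L * (y ^ θ * (s ^ 2) ^ L) := by rw [mul_pow]; ring
        _ ≤ _ := by gcongr
    have hD : C * y ^ θ ≤ κ / 4 * ((1 - ε) ^ L * y) := by
      have h1 : 4 * C / κ ≤ s ^ L := hL₀.le.trans (pow_le_pow_right₀ hs1.le hLL)
      have h2 : C ≤ κ / 4 * s ^ L := by
        rw [div_le_iff₀ hκ] at h1; linarith
      calc C * y ^ θ ≤ κ / 4 * s ^ L * y ^ θ := by gcongr
        _ = κ / 4 * (s ^ L * y ^ θ) := by ring
        _ ≤ _ := by gcongr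
    have hE : min (κ / 2) (1 / 2 / 2 ^ L₀) * y ^ θ ≤ κ / 2 * ((1 - ε) ^ L * y) := by
      have h1 : 1 * y ^ θ ≤ s ^ L * y ^ θ := by
        gcongr; exact one_le_pow₀ hs1.le
      calc min (κ / 2) (1 / 2 / 2 ^ L₀) * y ^ θ ≤ κ / 2 * y ^ θ := by
            gcongr; exact min_le_left _ _
        _ ≤ _ := by gcongr; linarith
    have hF := (abs_le.1 (hM y hy)).1
    linarith

/-- Abstract form of Chebyshev's upper bound and Mertens' first theorem: `T` is the convolution of
`M` with weights `w i` placed at the points `v i`, the set `Q x` consists of the `i` with `v i ≤ x`,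
and `M(y) = κ y + O(y ^ θ)`, `T(x) = κ x log x + O(x)`. -/
lemma mertens_first {ι : Type*} (v w : ι → ℝ) (Q : ℝ → Finset ι)
    (hQ : ∀ x i, i ∈ Q x ↔ v i ≤ x) (hv : ∀ i, 1 ≤ v i) (hw : ∀ i, 0 ≤ w i)
    (M T : ℝ → ℝ) (κ θ C K : ℝ) (hκ : 0 < κ) (hθ0 : 0 ≤ θ) (hθ1 : θ < 1)
    (hC : 0 ≤ C) (hK : 0 ≤ K)
    (hmono : Monotone M) (hM0 : ∀ y < 1, M y = 0) (hM1 : ∀ y, 1 ≤ y → 1 ≤ M y)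
    (hM : ∀ y, 1 ≤ y → |M y - κ * y| ≤ C * y ^ θ)
    (hT : ∀ x, T x = ∑ i ∈ Q x, w i * M (x / v i))
    (hTK : ∀ x, 1 ≤ x → |T x - κ * x * Real.log x| ≤ K * x) :
    ∃ D : ℝ, 0 ≤ D ∧ ∀ x, 1 ≤ x → ∑ i ∈ Q x, w i ≤ D * x ∧
      |∑ i ∈ Q x, w i / v i - Real.log x| ≤ D := by
  -- `ρ` and `c` define a kernel that dominates `c * y ^ θ`
  obtain ⟨ρ, c, hρ0, hρ1, hc, hg⟩ :=
    exists_positive_kernel M κ θ C hκ hθ1 hC hmono hM0 hM1 hM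
  have hT0 : ∀ x < 1, T x = 0 := by
    intro x hx
    rw [hT]
    apply Finset.sum_eq_zero
    intro i hi
    rw [hQ] at hi
    linarith [hv i]
  have hTs : ∀ x z, z ≤ x → T z = ∑ i ∈ Q x, w i * M (z / v i) := by
    intro x z hzx
    rw [hT]
    apply Finset.sum_subset
    · intro i hi
      rw [hQ] at hi ⊢
      linarith
    · intro i _ hi
      rw [hQ, not_le] at hi
      rw [hM0, mul_zero]
      rw [div_lt_one (by linarith [hv i])]
      exact hi
  have hR : ∀ x, 0 < x → T x - 2 * T (x / 2) ≤ (κ + 2 * K) * x := by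
    intro x hx
    rcases lt_or_ge x 1 with h1 | h1
    · rw [hT0 x h1, hT0 (x / 2) (by linarith)]
      have : 0 ≤ (κ + 2 * K) * x := by positivity
      linarith
    · have h2 : κ * (x / 2) * Real.log (x / 2) - K * (x / 2) ≤ T (x / 2) := by
        rcases lt_or_ge (x / 2) 1 with h3 | h3
        · rw [hT0 _ h3]
          have := Real.log_nonpos (by positivity) h3.le
          have h4 : κ * (x / 2) * Real.log (x / 2) ≤ 0 :=
            mul_nonpos_of_nonneg_of_nonpos (by positivity) this
          have : 0 ≤ K * (x / 2) := by positivity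
          linarith
        · linarith [(abs_le.1 (hTK _ h3)).1]
      have h3 := (abs_le.1 (hTK _ h1)).2
      rw [Real.log_div hx.ne' two_ne_zero] at h2
      have h4 : κ * x * Real.log 2 ≤ κ * x * 1 := by
        gcongr
        linarith [Real.log_two_lt_d9]
      linarith
  have hconv : ∀ x, 1 ≤ x →
      ∑ i ∈ Q x, w i * (x / v i) ^ θ ≤ (κ + 2 * K) / (1 - ρ) / c * x := by
    intro x hx
    have hx0 : 0 < x := by linarith
    obtain ⟨J, hJ⟩ := pow_unbounded_of_one_lt x (one_lt_two (α := ℝ))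
    rw [div_mul_eq_mul_div, le_div_iff₀ hc, mul_comm, Finset.mul_sum]
    calc ∑ i ∈ Q x, c * (w i * (x / v i) ^ θ)
        ≤ ∑ i ∈ Q x, w i * (M (x / v i) - ∑ j ∈ Finset.range J,
            (1 - ρ) * ρ ^ j * 2 ^ (j + 1) * M (x / v i / 2 ^ (j + 1))) := by
          apply Finset.sum_le_sum
          intro i hi
          rw [hQ] at hi
          have hvi := hv i
          rw [mul_left_comm]
          apply mul_le_mul_of_nonneg_left _ (hw i)
          apply hg
          · rwa [one_le_div (by linarith)]
          · exact (div_le_self hx0.le hvi).trans_lt hJ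
      _ = T x - ∑ j ∈ Finset.range J,
            (1 - ρ) * ρ ^ j * 2 ^ (j + 1) * T (x / 2 ^ (j + 1)) := by
          simp_rw [mul_sub, Finset.sum_sub_distrib]
          rw [← hT, Finset.sum_congr rfl (fun i _ => Finset.mul_sum _ _ _), Finset.sum_comm]
          congr 1
          apply Finset.sum_congr rfl
          intro j _
          rw [hTs x (x / 2 ^ (j + 1)) (div_le_self hx0.le (one_le_pow₀ (by norm_num))),
            Finset.mul_sum]
          apply Finset.sum_congr rfl
          intro i _
          rw [div_right_comm]
          ring
      _ = ∑ j ∈ Finset.range J, (2 * ρ) ^ j * (T (x / 2 ^ j) - 2 * T (x / 2 ^ (j + 1))) := by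
          rw [telescope_identity, hT0 (x / 2 ^ J) (by rwa [div_lt_one (by positivity)])]
          ring
      _ ≤ ∑ j ∈ Finset.range J, (κ + 2 * K) * x * ρ ^ j := by
          apply Finset.sum_le_sum
          intro j _
          have h := hR (x / 2 ^ j) (by positivity)
          rw [div_div, ← pow_succ] at h
          calc _ ≤ (2 * ρ) ^ j * ((κ + 2 * K) * (x / 2 ^ j)) := by gcongr
            _ = _ := by rw [mul_pow]; field_simp
      _ ≤ (κ + 2 * K) * x * (1 / (1 - ρ)) := by
          rw [← Finset.mul_sum]
          gcongr
          rw [le_div_iff₀ (by linarith), geom_sum_mul_neg]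
          have : 0 < ρ ^ J := by positivity
          linarith
      _ = _ := by ring
  set D := (κ + 2 * K) / (1 - ρ) / c with hD
  have hD0 : 0 ≤ D := by
    have : 0 < 1 - ρ := by linarith
    positivity
  refine ⟨D + (C * D + K) / κ, by positivity, ?_⟩
  intro x hx
  have hx0 : 0 < x := by linarith
  have hconvx := hconv x hx
  have hrest : 0 ≤ (C * D + K) / κ := by positivity
  constructor
  · calc ∑ i ∈ Q x, w i ≤ ∑ i ∈ Q x, w i * (x / v i) ^ θ := by
          apply Finset.sum_le_sum
          intro i hi
          rw [hQ] at hi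
          have hvi := hv i
          apply le_mul_of_one_le_right (hw i)
          exact Real.one_le_rpow (by rwa [one_le_div (by linarith)]) hθ0
      _ ≤ D * x := hconvx
      _ ≤ _ := by gcongr; linarith
  · have h1 : |T x - κ * x * ∑ i ∈ Q x, w i / v i| ≤ C * D * x := by
      rw [hT, Finset.mul_sum, ← Finset.sum_sub_distrib]
      calc _ ≤ ∑ i ∈ Q x, |w i * M (x / v i) - κ * x * (w i / v i)| :=
            Finset.abs_sum_le_sum_abs _ _
        _ ≤ ∑ i ∈ Q x, C * (w i * (x / v i) ^ θ) := by
          apply Finset.sum_le_sum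
          intro i hi
          rw [hQ] at hi
          have hvi := hv i
          have h := hM (x / v i) (by rwa [one_le_div (by linarith)])
          have e : w i * M (x / v i) - κ * x * (w i / v i) =
            w i * (M (x / v i) - κ * (x / v i)) := by ring
          rw [e, abs_mul, abs_of_nonneg (hw i), mul_left_comm]
          exact mul_le_mul_of_nonneg_left h (hw i)
        _ ≤ _ := by
          rw [← Finset.mul_sum, mul_assoc]
          gcongr
    have h2 := hTK x hx
    set S := ∑ i ∈ Q x, w i / v i
    have h3 : |κ * x * (S - Real.log x)| ≤ (C * D + K) * x := by
      rw [abs_le] at h1 h2 ⊢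
      constructor <;> linarith
    rw [abs_mul, abs_of_pos (by positivity)] at h3
    have h4 : |S - Real.log x| ≤ (C * D + K) / κ := by
      rw [le_div_iff₀ hκ]
      have : x * (κ * |S - Real.log x|) ≤ x * (C * D + K) := by linarith
      linarith [le_of_mul_le_mul_left this hx0]
    linarith

/-! ### Partial summation -/

/-- Partial summation from `B n = log n + O(1)` to `V n = log log n + A + O(1 / log n)`. With
`r n = B n - log n`, consecutive values of `V n - log log n - r n / log n` differ by at most a constant
times `1 / log n - 1 / log (n + 1)`, so nested intervals produce `A`. -/
lemma mertens_second (V B : ℕ → ℝ) (K : ℝ)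
    (hVB : ∀ n, V (n + 1) - V n = (B (n + 1) - B n) / Real.log (n + 1 : ℕ))
    (hB : ∀ n : ℕ, 2 ≤ n → |B n - Real.log n| ≤ K) :
    ∃ A : ℝ, ∀ n : ℕ, 2 ≤ n →
      |V n - Real.log (Real.log n) - A| ≤ (2 * K + 1) / Real.log n := by
  have hlog : ∀ n : ℕ, 2 ≤ n → 0 < Real.log n := fun n hn =>
    Real.log_pos (by exact_mod_cast hn)
  set W : ℕ → ℝ := fun n => V n - Real.log (Real.log n) - (B n - Real.log n) / Real.log n with hW
  have hstep : ∀ n : ℕ, 2 ≤ n →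
      |W (n + 1) - W n| ≤ (K + 1) / Real.log n - (K + 1) / Real.log (n + 1 : ℕ) := by
    intro n hn
    have hs := hlog n hn
    have ht := hlog (n + 1) (by omega)
    have hn0 : (0 : ℝ) < n := by positivity
    have hst : Real.log n ≤ Real.log (n + 1 : ℕ) := Real.log_le_log hn0 (by push_cast; linarith)
    have hts : Real.log (n + 1 : ℕ) - Real.log n ≤ 1 := by
      rw [← Real.log_div (by positivity) hn0.ne']
      refine (Real.log_le_sub_one_of_pos (by positivity)).trans ?_
      rw [sub_le_iff_le_add, div_le_iff₀ hn0]
      have : (2 : ℝ) ≤ n := by exact_mod_cast hn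
      push_cast; linarith
    have hr := hB n hn
    have hV := hVB n
    simp only [hW]
    set s := Real.log n
    set t := Real.log (n + 1 : ℕ)
    have e : V (n + 1) - Real.log t - (B (n + 1) - t) / t - (V n - Real.log s - (B n - s) / s) =
        (B n - s) * (1 / s - 1 / t) + ((t - s) / t - (Real.log t - Real.log s)) := by
      have : V (n + 1) = V n + (B (n + 1) - B n) / t := by linarith
      rw [this]
      field_simp
      ring
    rw [e]
    have hd : 0 ≤ 1 / s - 1 / t := sub_nonneg.2 (one_div_le_one_div_of_le hs hst)
    -- `1 - s / t ≤ log (t / s) ≤ t / s - 1`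
    have hu : Real.log t - Real.log s ≤ (t - s) / s := by
      rw [← Real.log_div ht.ne' hs.ne', sub_div, div_self hs.ne']
      exact Real.log_le_sub_one_of_pos (by positivity)
    have hl : (t - s) / t ≤ Real.log t - Real.log s := by
      rw [← Real.log_div ht.ne' hs.ne', sub_div, div_self ht.ne']
      have := Real.one_sub_inv_le_log_of_pos (x := t / s) (by positivity)
      rwa [inv_div] at this
    have h1 : |(B n - s) * (1 / s - 1 / t)| ≤ K * (1 / s - 1 / t) := by
      rw [abs_mul, abs_of_nonneg hd]
      gcongr
    have h2 : |(t - s) / t - (Real.log t - Real.log s)| ≤ 1 * (1 / s - 1 / t) := by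
      rw [abs_of_nonpos (by linarith)]
      calc _ ≤ (t - s) / s - (t - s) / t := by linarith
        _ = (t - s) * (1 / s - 1 / t) := by ring
        _ ≤ _ := by gcongr
    calc _ ≤ _ := abs_add_le _ _
      _ ≤ K * (1 / s - 1 / t) + 1 * (1 / s - 1 / t) := add_le_add h1 h2
      _ = _ := by ring
  have hK : 0 ≤ K := (abs_nonneg _).trans (hB 2 le_rfl)
  set f : ℕ → ℝ := fun n => W (n + 2) - (K + 1) / Real.log (n + 2 : ℕ)
  set g : ℕ → ℝ := fun n => W (n + 2) + (K + 1) / Real.log (n + 2 : ℕ)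
  have hf : Monotone f := monotone_nat_of_le_succ fun n => by
    have := (abs_le.1 (hstep (n + 2) (by omega))).1
    simp only [f]
    rw [show n + 1 + 2 = n + 2 + 1 by ring]
    linarith
  have hg : Antitone g := antitone_nat_of_succ_le fun n => by
    have := (abs_le.1 (hstep (n + 2) (by omega))).2
    simp only [g]
    rw [show n + 1 + 2 = n + 2 + 1 by ring]
    linarith
  have hfg : f ≤ g := fun n => by
    have := hlog (n + 2) (by omega)
    have : 0 ≤ (K + 1) / Real.log (n + 2 : ℕ) := by positivity
    simp only [f, g]
    linarith
  have hA := hf.ciSup_mem_iInter_Icc_of_antitone hg hfg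
  refine ⟨⨆ n, f n, fun n hn => ?_⟩
  obtain ⟨m, rfl⟩ := Nat.exists_eq_add_of_le' hn
  have hm := Set.mem_iInter.1 hA m
  have hl := hlog (m + 2) hn
  have hr := hB (m + 2) hn
  have hr' : |(B (m + 2) - Real.log (m + 2 : ℕ)) / Real.log (m + 2 : ℕ)| ≤
      K / Real.log (m + 2 : ℕ) := by
    rw [abs_div, abs_of_pos hl]
    gcongr
  have e : (2 * K + 1) / Real.log (m + 2 : ℕ) =
    K / Real.log (m + 2 : ℕ) + (K + 1) / Real.log (m + 2 : ℕ) := by ring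
  rw [e]
  simp only [f, g, hW, Set.mem_Icc] at hm
  rw [abs_le] at hr' ⊢
  constructor <;> linarith [hm.1, hm.2, hr'.1, hr'.2]

/-! ### Consequences of the counting axiom -/

/-- By induction on the dyadic size of `x`: passing from `x / 2` to `x` costs `log 2` for each
element of `F x`. -/
lemma sum_log_div_le {α : Type*} (u : α → ℝ) (F : ℝ → Finset α)
    (hF : ∀ x a, a ∈ F x ↔ u a ≤ x) (hu : ∀ a, 1 ≤ u a) (c : ℝ)
    (hc : ∀ x, 1 ≤ x → ((F x).card : ℝ) ≤ c * x) (x : ℝ) (hx : 0 < x) :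
    ∑ a ∈ F x, (Real.log x - Real.log (u a)) ≤ 2 * c * x := by
  classical
  have hc0 : 0 ≤ c := by simpa using (Nat.cast_nonneg _).trans (hc 1 le_rfl)
  obtain ⟨J, hJ⟩ := pow_unbounded_of_one_lt x (one_lt_two (α := ℝ))
  induction J generalizing x with
  | zero =>
    rw [pow_zero] at hJ
    rw [Finset.sum_eq_zero]
    · positivity
    · intro a ha
      rw [hF] at ha
      linarith [hu a]
  | succ J ih =>
    have h := ih (x / 2) (by positivity) (by rw [pow_succ] at hJ; linarith)
    rcases lt_or_ge x 1 with h1 | h1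
    · rw [Finset.sum_eq_zero]
      · positivity
      · intro a ha
        rw [hF] at ha
        linarith [hu a]
    have hsub : F (x / 2) ⊆ F x := by
      intro a ha
      rw [hF] at ha ⊢
      linarith
    have hle : ∑ a ∈ F x, (Real.log (x / 2) - Real.log (u a)) ≤
        ∑ a ∈ F (x / 2), (Real.log (x / 2) - Real.log (u a)) := by
      rw [← Finset.sum_sdiff hsub, add_le_iff_nonpos_left]
      apply Finset.sum_nonpos
      intro a ha
      rw [Finset.mem_sdiff, hF, hF, not_le] at ha
      have := Real.log_le_log (by positivity) ha.2.le
      linarith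
    have e : ∑ a ∈ F x, (Real.log x - Real.log (u a)) =
        (F x).card * Real.log 2 + ∑ a ∈ F x, (Real.log (x / 2) - Real.log (u a)) := by
      rw [← nsmul_eq_mul, ← Finset.sum_const, ← Finset.sum_add_distrib]
      apply Finset.sum_congr rfl
      intro a _
      rw [Real.log_div hx.ne' two_ne_zero]
      ring
    have h2 : ((F x).card : ℝ) * Real.log 2 ≤ c * x * 1 := by
      apply mul_le_mul (hc x h1) _ (Real.log_nonneg (by norm_num)) (by positivity)
      linarith [Real.log_two_lt_d9]
    rw [e]
    linarith

/-- `∑_{u a ≤ x} log (u a) = κ x log x + O(x)`, obtained by comparing with `|F x| log x`. -/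
lemma sum_log_asymp {α : Type*} (u : α → ℝ) (F : ℝ → Finset α)
    (hF : ∀ x a, a ∈ F x ↔ u a ≤ x) (hu : ∀ a, 1 ≤ u a) (κ θ C : ℝ) (hκ : 0 < κ)
    (hθ1 : θ < 1) (hC : 0 ≤ C)
    (hM : ∀ y, 1 ≤ y → |((F y).card : ℝ) - κ * y| ≤ C * y ^ θ) :
    ∃ K : ℝ, 0 ≤ K ∧ ∀ x, 1 ≤ x →
      |∑ a ∈ F x, Real.log (u a) - κ * x * Real.log x| ≤ K * x := by
  have hθ : 0 < 1 - θ := by linarith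
  have hc : ∀ x, 1 ≤ x → ((F x).card : ℝ) ≤ (κ + C) * x := by
    intro x hx
    have h1 := (abs_le.1 (hM x hx)).2
    have h2 : x ^ θ ≤ x := by
      simpa using Real.rpow_le_rpow_of_exponent_le hx hθ1.le
    have h3 : C * x ^ θ ≤ C * x := by gcongr
    linarith
  refine ⟨C / (1 - θ) + 2 * (κ + C), by positivity, fun x hx => ?_⟩
  have hx0 : 0 < x := by linarith
  have hlog : 0 ≤ Real.log x := Real.log_nonneg hx
  have h1 := sum_log_div_le u F hF hu _ hc x hx0
  have h0 : 0 ≤ ∑ a ∈ F x, (Real.log x - Real.log (u a)) := by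
    apply Finset.sum_nonneg
    intro a ha
    rw [hF] at ha
    have := Real.log_le_log (by linarith [hu a]) ha
    linarith
  rw [Finset.sum_sub_distrib, Finset.sum_const, nsmul_eq_mul] at h0 h1
  have h2 : |((F x).card - κ * x) * Real.log x| ≤ C / (1 - θ) * x := by
    rw [abs_mul, abs_of_nonneg hlog]
    calc _ ≤ C * x ^ θ * (x ^ (1 - θ) / (1 - θ)) :=
          mul_le_mul (hM x hx) (Real.log_le_rpow_div hx0.le hθ) hlog (by positivity)
      _ = C / (1 - θ) * (x ^ θ * x ^ (1 - θ)) := by ring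
      _ = _ := by rw [← Real.rpow_add hx0]; simp
  rw [abs_le] at h2 ⊢
  constructor <;> linarith [h2.1, h2.2]

/-- Dyadic summation of a Chebyshev bound: `w a / u a ^ 2` sums to at most `2 D / 2 ^ J` over
`2 ^ J < u a ≤ 2 ^ (J + 1)`. -/
lemma sum_div_sq_le {α : Type*} (u w : α → ℝ) (F : ℝ → Finset α)
    (hF : ∀ x a, a ∈ F x ↔ u a ≤ x) (hu : ∀ a, 1 < u a) (hw : ∀ a, 0 ≤ w a) (D : ℝ)
    (hD : ∀ x, 1 ≤ x → ∑ a ∈ F x, w a ≤ D * x) (x : ℝ) :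
    ∑ a ∈ F x, w a / u a ^ 2 ≤ 4 * D := by
  classical
  have hD0 : 0 ≤ D := by
    simpa using (Finset.sum_nonneg fun a _ => hw a).trans (hD 1 le_rfl)
  have key : ∀ J : ℕ, ∑ a ∈ F (2 ^ J), w a / u a ^ 2 ≤ 4 * D * (1 - 1 / 2 ^ J) := by
    intro J
    induction J with
    | zero =>
      rw [Finset.sum_eq_zero]
      · simp
      · intro a ha
        rw [hF] at ha
        linarith [hu a]
    | succ J ih =>
      have hsub : F (2 ^ J) ⊆ F (2 ^ (J + 1)) := by
        intro a ha
        rw [hF] at ha ⊢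
        exact ha.trans (pow_le_pow_right₀ (by norm_num) (by omega))
      rw [← Finset.sum_sdiff hsub]
      have h : ∑ a ∈ F (2 ^ (J + 1)) \ F (2 ^ J), w a / u a ^ 2 ≤ 4 * D / 2 ^ (J + 1) := by
        calc _ ≤ ∑ a ∈ F (2 ^ (J + 1)) \ F (2 ^ J), w a / (2 ^ J) ^ 2 := by
              apply Finset.sum_le_sum
              intro a ha
              rw [Finset.mem_sdiff, hF, hF, not_le] at ha
              have := hw a
              have := ha.2
              gcongr
          _ ≤ ∑ a ∈ F (2 ^ (J + 1)), w a / (2 ^ J) ^ 2 :=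
              Finset.sum_le_sum_of_subset_of_nonneg Finset.sdiff_subset
                fun a _ _ => div_nonneg (hw a) (by positivity)
          _ ≤ D * 2 ^ (J + 1) / (2 ^ J) ^ 2 := by
              rw [← Finset.sum_div]
              gcongr
              exact hD _ (one_le_pow₀ (by norm_num))
          _ = _ := by
              rw [pow_succ]; field_simp; norm_num
      have e : 4 * D * (1 - 1 / 2 ^ (J + 1)) = 4 * D * (1 - 1 / 2 ^ J) + 4 * D / 2 ^ (J + 1) := by
        rw [pow_succ]; field_simp; ring
      linarith
  obtain ⟨J, hJ⟩ := pow_unbounded_of_one_lt x (one_lt_two (α := ℝ))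
  calc ∑ a ∈ F x, w a / u a ^ 2 ≤ ∑ a ∈ F (2 ^ J), w a / u a ^ 2 := by
        apply Finset.sum_le_sum_of_subset_of_nonneg
        · intro a ha
          rw [hF] at ha ⊢
          linarith
        · intro a _ _
          exact div_nonneg (hw a) (by positivity)
    _ ≤ 4 * D * (1 - 1 / 2 ^ J) := key J
    _ ≤ 4 * D * 1 := by
        gcongr
        have : (0 : ℝ) ≤ 1 / 2 ^ J := by positivity
        linarith
    _ = _ := mul_one _

/-! ### Norms and prime powers -/

lemma mnorm_add {P : Type*} (N : P → ℕ) (m n : P →₀ ℕ) :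
    mnorm N (m + n) = mnorm N m * mnorm N n :=
  Finsupp.prod_add_index' (fun _ => pow_zero _) fun _ _ _ => pow_add _ _ _

lemma mnorm_single {P : Type*} (N : P → ℕ) (p : P) (k : ℕ) :
    mnorm N (Finsupp.single p k) = N p ^ k :=
  Finsupp.prod_single_index (pow_zero _)

lemma mnorm_pos {P : Type*} (N : P → ℕ) (hN : ∀ p, 1 < N p) (m : P →₀ ℕ) : 1 ≤ mnorm N m :=
  Finset.prod_pos fun p _ => pow_pos (zero_lt_one.trans (hN p)) _

lemma single_le_of_lt {P : Type*} {m : P →₀ ℕ} {p : P} {k : ℕ} (h : k < m p) :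
    Finsupp.single p (k + 1) ≤ m := by
  classical
  intro q
  rw [Finsupp.single_apply]
  split_ifs with hq
  · subst hq; exact h
  · exact Nat.zero_le _

lemma mnorm_tsub {P : Type*} (N : P → ℕ) {m : P →₀ ℕ} {p : P} {k : ℕ} (h : k < m p) :
    mnorm N (m - Finsupp.single p (k + 1)) * N p ^ (k + 1) = mnorm N m := by
  rw [← mnorm_single, ← mnorm_add, tsub_add_cancel_of_le (single_le_of_lt h)]

/-- The identity `log N(m) = ∑_{p ^ (k + 1) ∣ m} log N(p)` summed over `N(m) ≤ x`. The pair `(p, k)`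
stands for the prime power `p ^ (k + 1)`. -/
lemma sum_log_mnorm {P : Type*} (N : P → ℕ) (hN : ∀ p, 1 < N p)
    (F : ℝ → Finset (P →₀ ℕ)) (hF : ∀ x m, m ∈ F x ↔ (mnorm N m : ℝ) ≤ x)
    (Q : ℝ → Finset (P × ℕ)) (hQ : ∀ x i, i ∈ Q x ↔ (N i.1 : ℝ) ^ (i.2 + 1) ≤ x) (x : ℝ) :
    ∑ m ∈ F x, Real.log (mnorm N m) =
      ∑ i ∈ Q x, Real.log (N i.1) * ((F (x / (N i.1 : ℝ) ^ (i.2 + 1))).card : ℝ) := by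
  classical
  have hlog : ∀ m ∈ F x, Real.log (mnorm N m) =
      ∑ i ∈ Q x, if i.2 < m i.1 then Real.log (N i.1) else 0 := by
    intro m hm
    rw [hF] at hm
    rw [← Finset.sum_filter]
    have h1 : Real.log (mnorm N m) =
        ∑ p ∈ m.support, ∑ k ∈ Finset.range (m p), Real.log (N p) := by
      simp only [mnorm, Finsupp.prod, Finset.sum_const, Finset.card_range, nsmul_eq_mul]
      push_cast
      rw [Real.log_prod]
      · simp
      · intro p _
        have := hN p
        positivity
    rw [h1, Finset.sum_sigma']
    refine Finset.sum_nbij' (fun i => (i.1, i.2)) (fun i => ⟨i.1, i.2⟩) ?_ ?_ ?_ ?_ ?_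
    · rintro ⟨p, k⟩ hi
      simp only [Finset.mem_sigma, Finset.mem_range] at hi
      simp only [Finset.mem_filter, hQ]
      refine ⟨le_trans ?_ hm, hi.2⟩
      rw [← mnorm_tsub N hi.2]
      exact_mod_cast Nat.le_mul_of_pos_left _ (mnorm_pos N hN _)
    · rintro ⟨p, k⟩ hi
      simp only [Finset.mem_filter] at hi
      simp only [Finset.mem_sigma, Finset.mem_range, Finsupp.mem_support_iff]
      exact ⟨by omega, hi.2⟩
    · simp
    · simp
    · simp
  rw [Finset.sum_congr rfl hlog, Finset.sum_comm]
  apply Finset.sum_congr rfl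
  rintro ⟨p, k⟩ _
  have hNp : (0 : ℝ) < (N p : ℝ) ^ (k + 1) := by
    have := hN p
    positivity
  rw [← Finset.sum_filter, Finset.sum_const, nsmul_eq_mul, mul_comm]
  congr 2
  -- `m ↦ m - (k + 1) p` is a bijection onto the elements of norm at most `x / N p ^ (k + 1)`
  refine Finset.card_nbij' (fun m => m - Finsupp.single p (k + 1))
    (fun m => m + Finsupp.single p (k + 1)) ?_ ?_ ?_ ?_
  · intro m hm
    simp only [Finset.coe_filter, Set.mem_ofPred_eq, hF] at hm
    simp only [Finset.mem_coe, hF]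
    rw [le_div_iff₀ hNp]
    refine le_trans (le_of_eq ?_) hm.1
    exact_mod_cast mnorm_tsub N hm.2
  · intro m hm
    simp only [Finset.mem_coe, hF] at hm
    rw [le_div_iff₀ hNp] at hm
    simp only [Finset.coe_filter, Set.mem_ofPred_eq, hF]
    rw [mnorm_add, mnorm_single]
    constructor
    · exact_mod_cast hm
    · simp
      omega
  · intro m hm
    simp only [Finset.coe_filter, Set.mem_ofPred_eq] at hm
    exact tsub_add_cancel_of_le (single_le_of_lt hm.2)
  · intro m _
    exact add_tsub_cancel_right _ _

lemma finite_prime_powers {P : Type*} (N : P → ℕ) (x : ℝ)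
    (h : {m : P →₀ ℕ | (mnorm N m : ℝ) ≤ x}.Finite) :
    {i : P × ℕ | (N i.1 : ℝ) ^ (i.2 + 1) ≤ x}.Finite := by
  have hinj : Function.Injective
      (fun i : P × ℕ => (Finsupp.single i.1 (i.2 + 1) : P →₀ ℕ)) := by
    rintro ⟨p, k⟩ ⟨q, l⟩ e
    rcases (Finsupp.single_eq_single_iff _ _ _ _).1 e with h1 | h1
    · simp only [Prod.mk.injEq]
      exact ⟨h1.1, by omega⟩
    · simp at h1
  refine (h.preimage hinj.injOn).subset ?_
  intro i hi
  change (mnorm N (Finsupp.single i.1 (i.2 + 1)) : ℝ) ≤ x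
  rw [mnorm_single, Nat.cast_pow]
  exact hi

/-- Proper prime powers contribute a bounded amount to `∑ log N(p) / N(p) ^ (k + 1)`: by the
geometric series they add at most `2 log N(p) / N(p) ^ 2` for each `p`. -/
lemma primes_of_prime_powers {P : Type*} (N : P → ℕ) (hN : ∀ p, 1 < N p)
    (Q : ℝ → Finset (P × ℕ)) (hQ : ∀ x i, i ∈ Q x ↔ (N i.1 : ℝ) ^ (i.2 + 1) ≤ x)
    (F : ℝ → Finset P) (hF : ∀ x p, p ∈ F x ↔ (N p : ℝ) ≤ x) (D : ℝ)
    (hD : ∀ x, 1 ≤ x → ∑ i ∈ Q x, Real.log (N i.1) ≤ D * x) (x : ℝ) :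
    ∑ p ∈ F x, Real.log (N p) / N p ≤
        ∑ i ∈ Q x, Real.log (N i.1) / (N i.1 : ℝ) ^ (i.2 + 1) ∧
      ∑ i ∈ Q x, Real.log (N i.1) / (N i.1 : ℝ) ^ (i.2 + 1) ≤
        ∑ p ∈ F x, Real.log (N p) / N p + 8 * D := by
  have hN2 : ∀ p, (2 : ℝ) ≤ N p := fun p => by exact_mod_cast hN p
  have hl : ∀ p, 0 ≤ Real.log (N p) := fun p => Real.log_nonneg (by linarith [hN2 p])
  have hemb : ∀ x, (F x).map ⟨fun p => (p, 0), Prod.mk_left_injective 0⟩ ⊆ Q x := by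
    intro x i hi
    obtain ⟨p, hp, rfl⟩ := Finset.mem_map.1 hi
    rw [hF] at hp
    simpa [hQ] using hp
  constructor
  · calc ∑ p ∈ F x, Real.log (N p) / N p
        = ∑ i ∈ (F x).map ⟨fun p => (p, 0), Prod.mk_left_injective 0⟩,
            Real.log (N i.1) / (N i.1 : ℝ) ^ (i.2 + 1) := by
          simp
      _ ≤ _ := Finset.sum_le_sum_of_subset_of_nonneg (hemb x)
          fun i _ _ => div_nonneg (hl _) (by positivity)
  · have hD' : ∀ x, 1 ≤ x → ∑ p ∈ F x, Real.log (N p) ≤ D * x := by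
      intro x hx
      refine le_trans ?_ (hD x hx)
      calc ∑ p ∈ F x, Real.log (N p)
          = ∑ i ∈ (F x).map ⟨fun p => (p, 0), Prod.mk_left_injective 0⟩,
            Real.log (N i.1) := by simp
        _ ≤ _ := Finset.sum_le_sum_of_subset_of_nonneg (hemb x) fun i _ _ => hl _
    have hsq := sum_div_sq_le (fun p => (N p : ℝ)) (fun p => Real.log (N p)) F hF
      (fun p => by linarith [hN2 p]) hl D hD' x
    set n := (Q x).sup fun i => i.2 + 1
    have hsub : Q x ⊆ F x ×ˢ Finset.range n := by
      intro i hi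
      rw [Finset.mem_product, Finset.mem_range, hF]
      refine ⟨le_trans ?_ ((hQ _ _).1 hi), Finset.le_sup (f := fun i : P × ℕ => i.2 + 1) hi⟩
      exact le_self_pow₀ (by linarith [hN2 i.1]) (by omega)
    calc ∑ i ∈ Q x, Real.log (N i.1) / (N i.1 : ℝ) ^ (i.2 + 1)
        ≤ ∑ i ∈ F x ×ˢ Finset.range n, Real.log (N i.1) / (N i.1 : ℝ) ^ (i.2 + 1) :=
          Finset.sum_le_sum_of_subset_of_nonneg hsub
            fun i _ _ => div_nonneg (hl _) (by positivity)
      _ = ∑ p ∈ F x, ∑ k ∈ Finset.range n, Real.log (N p) / (N p : ℝ) ^ (k + 1) :=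
          Finset.sum_product _ _ _
      _ ≤ ∑ p ∈ F x, (Real.log (N p) / N p + 2 * (Real.log (N p) / (N p : ℝ) ^ 2)) := by
          apply Finset.sum_le_sum
          intro p _
          have h2 := hN2 p
          have hg : ∑ k ∈ Finset.range n, ((N p : ℝ)⁻¹) ^ k ≤ (1 - (N p : ℝ)⁻¹)⁻¹ := by
            have hlt : (N p : ℝ)⁻¹ < 1 := inv_lt_one_of_one_lt₀ (by linarith)
            rw [← tsum_geometric_of_lt_one (by positivity) hlt]
            exact (summable_geometric_of_lt_one (by positivity) hlt).sum_le_tsum _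
              fun _ _ => by positivity
          have hb : (1 - (N p : ℝ)⁻¹)⁻¹ ≤ 1 + 2 / N p := by
            have e : (1 - (N p : ℝ)⁻¹)⁻¹ = N p / (N p - 1) := by
              rw [← inv_div]; congr 1; field_simp
            rw [e, div_le_iff₀ (by linarith)]
            have : (1 + 2 / (N p : ℝ)) * (N p - 1) = N p + 1 - 2 / N p := by
              field_simp; ring
            rw [this]
            have : 2 / (N p : ℝ) ≤ 1 := by rw [div_le_one (by linarith)]; exact h2
            linarith
          calc ∑ k ∈ Finset.range n, Real.log (N p) / (N p : ℝ) ^ (k + 1)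
              = Real.log (N p) / N p * ∑ k ∈ Finset.range n, ((N p : ℝ)⁻¹) ^ k := by
                rw [Finset.mul_sum]
                apply Finset.sum_congr rfl
                intro k _
                rw [pow_succ, inv_pow]
                field_simp
            _ ≤ Real.log (N p) / N p * (1 + 2 / N p) := by
                have := hl p
                gcongr
                exact hg.trans hb
            _ = _ := by field_simp
      _ ≤ _ := by
          rw [Finset.sum_add_distrib, ← Finset.mul_sum]
          linarith

/-! ### The theorem -/

/-- Generalized Mertens theorem: under the counting axiom,
`∑_{N(𝔭) ≤ x} 1/N(𝔭) = log log x + A + O(1/log x)` for a constant `A` depending only on `P`. -/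
theorem mertens_monoid {P : Type*} [Countable P]
    (N : P → ℕ) (hN : ∀ p, 1 < N p)
    (κ : ℝ) (hκ : 0 < κ) (θ : ℝ) (hθ0 : 0 ≤ θ) (hθ1 : θ < 1) (C : ℝ)
    (hcount : ∀ x : ℝ, 1 ≤ x →
      {m : P →₀ ℕ | (mnorm N m : ℝ) ≤ x}.Finite ∧
      |({m : P →₀ ℕ | (mnorm N m : ℝ) ≤ x}.ncard : ℝ) - κ * x| ≤ C * x ^ θ) :
    ∃ A : ℝ, ∃ D > 0, ∀ x : ℝ, 3 ≤ x →
      {p : P | (N p : ℝ) ≤ x}.Finite ∧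
      |(∑' p : {p : P | (N p : ℝ) ≤ x}, ((N p.1 : ℝ))⁻¹)
          - Real.log (Real.log x) - A| ≤ D / Real.log x := by
  classical
  have hN2 : ∀ p, (2 : ℝ) ≤ N p := fun p => by exact_mod_cast hN p
  have hC : 0 ≤ C := by simpa using (abs_nonneg _).trans (hcount 1 le_rfl).2
  have hfin : ∀ x : ℝ, {m : P →₀ ℕ | (mnorm N m : ℝ) ≤ x}.Finite := fun x =>
    (hcount (max x 1) (le_max_right _ _)).1.subset fun m hm => by
      rw [Set.mem_ofPred_eq] at hm ⊢
      exact le_max_of_le_left hm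
  have hfinQ := fun x => finite_prime_powers N x (hfin x)
  have hfinP : ∀ x : ℝ, {p : P | (N p : ℝ) ≤ x}.Finite := fun x =>
    ((hfinQ x).image Prod.fst).subset fun p hp => ⟨(p, 0), by simpa using hp, rfl⟩
  set F : ℝ → Finset (P →₀ ℕ) := fun x => (hfin x).toFinset with hFdef
  set Q : ℝ → Finset (P × ℕ) := fun x => (hfinQ x).toFinset
  set G : ℝ → Finset P := fun x => (hfinP x).toFinset
  have hF : ∀ x m, m ∈ F x ↔ (mnorm N m : ℝ) ≤ x := fun x m => by simp [F]
  have hQ : ∀ x i, i ∈ Q x ↔ (N i.1 : ℝ) ^ (i.2 + 1) ≤ x := fun x i => by simp [Q]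
  have hG : ∀ x p, p ∈ G x ↔ (N p : ℝ) ≤ x := fun x p => by simp [G]
  have hu : ∀ m, (1 : ℝ) ≤ mnorm N m := fun m => by exact_mod_cast mnorm_pos N hN m
  have hM : ∀ y, 1 ≤ y → |((F y).card : ℝ) - κ * y| ≤ C * y ^ θ := by
    intro y hy
    have := (hcount y hy).2
    rwa [Set.ncard_eq_toFinset_card _ (hfin y)] at this
  obtain ⟨K, hK0, hK⟩ := sum_log_asymp (fun m => (mnorm N m : ℝ)) F hF hu κ θ C hκ hθ1 hC hM
  obtain ⟨D, hD0, hD⟩ := mertens_first (fun i : P × ℕ => (N i.1 : ℝ) ^ (i.2 + 1))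
    (fun i => Real.log (N i.1)) Q hQ
    (fun i => one_le_pow₀ (by linarith [hN2 i.1]))
    (fun i => Real.log_nonneg (by linarith [hN2 i.1]))
    (fun y => ((F y).card : ℝ)) (fun x => ∑ m ∈ F x, Real.log (mnorm N m))
    κ θ C K hκ hθ0 hθ1 hC hK0
    (fun y z hyz => by
      dsimp only
      exact_mod_cast Finset.card_le_card fun m hm => by
        rw [hF] at hm ⊢
        exact hm.trans hyz)
    (fun y hy => by
      rw [Nat.cast_eq_zero, Finset.card_eq_zero, Finset.eq_empty_iff_forall_notMem]
      intro m hm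
      rw [hF] at hm
      linarith [hu m])
    (fun y hy => by
      exact_mod_cast Finset.card_pos.2 ⟨0, by rw [hF]; simpa [mnorm] using hy⟩)
    hM (sum_log_mnorm N hN F hF Q hQ) hK
  have hprime := primes_of_prime_powers N hN Q hQ G hG D (fun x hx => (hD x hx).1)
  obtain ⟨A, hA⟩ := mertens_second (fun n => ∑ p ∈ G n, (N p : ℝ)⁻¹)
    (fun n => ∑ p ∈ G n, Real.log (N p) / N p) (9 * D)
    (fun n => by
      have hsub : G n ⊆ G (n + 1 : ℕ) := by
        intro p hp
        rw [hG] at hp ⊢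
        push_cast
        linarith
      rw [← Finset.sum_sdiff hsub, ← Finset.sum_sdiff hsub, add_sub_cancel_right,
        add_sub_cancel_right, Finset.sum_div]
      apply Finset.sum_congr rfl
      intro p hp
      rw [Finset.mem_sdiff, hG, hG, Nat.cast_le, Nat.cast_le] at hp
      have hp' : n + 1 = N p := by omega
      have : Real.log (N p) ≠ 0 := (Real.log_pos (by linarith [hN2 p])).ne'
      rw [hp']
      field_simp)
    (fun n hn => by
      have h1 := (hD n (by exact_mod_cast (by omega : 1 ≤ n))).2
      have h2 := hprime n
      rw [abs_le] at h1 ⊢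
      constructor <;> linarith [h1.1, h1.2, h2.1, h2.2])
  refine ⟨A, 2 * (2 * (9 * D) + 2), by positivity, fun x hx => ⟨hfinP x, ?_⟩⟩
  have hsum : ∑' p : {p : P | (N p : ℝ) ≤ x}, ((N p.1 : ℝ))⁻¹ =
      ∑ p ∈ G (⌊x⌋₊ : ℕ), (N p : ℝ)⁻¹ := by
    have e : {p : P | (N p : ℝ) ≤ x} = ↑(G (⌊x⌋₊ : ℕ)) := by
      ext p
      rw [Finset.mem_coe, hG, Nat.cast_le, Nat.le_floor_iff (by linarith)]
      rfl
    rw [e]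
    exact Finset.tsum_subtype _ fun p => (N p : ℝ)⁻¹
  rw [hsum]
  set n := ⌊x⌋₊
  have hn3 : 3 ≤ n := Nat.le_floor (by exact_mod_cast hx)
  have hn3' : (3 : ℝ) ≤ n := by exact_mod_cast hn3
  have hnx : (n : ℝ) ≤ x := Nat.floor_le (by linarith)
  have hxn : x < n + 1 := Nat.lt_floor_add_one x
  have hln : 0 < Real.log n := Real.log_pos (by linarith)
  have hlx : Real.log n ≤ Real.log x := Real.log_le_log (by linarith) hnx
  -- `x < n + 1 ≤ n ^ 2`
  have hl2 : Real.log x ≤ 2 * Real.log n := by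
    rw [← Real.log_rpow (by linarith)]
    apply Real.log_le_log (by linarith)
    rw [Real.rpow_two]
    nlinarith
  have hl1 : Real.log x - Real.log n ≤ 1 := by
    rw [← Real.log_div (by linarith) (by linarith)]
    refine (Real.log_le_sub_one_of_pos (by positivity)).trans ?_
    rw [sub_le_iff_le_add, div_le_iff₀ (by linarith)]
    linarith
  have hll0 : Real.log (Real.log n) ≤ Real.log (Real.log x) := Real.log_le_log hln hlx
  have hll : Real.log (Real.log x) - Real.log (Real.log n) ≤ 1 / Real.log n := by
    rw [← Real.log_div (by linarith) hln.ne']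
    refine (Real.log_le_sub_one_of_pos (div_pos (by linarith) hln)).trans ?_
    rw [div_sub_one hln.ne']
    gcongr
  have hfinal : (2 * (9 * D) + 2) / Real.log n ≤ 2 * (2 * (9 * D) + 2) / Real.log x := by
    rw [div_le_div_iff₀ hln (by linarith)]
    nlinarith
  have h := hA n (by omega)
  have e : (2 * (9 * D) + 2) / Real.log n = (2 * (9 * D) + 1) / Real.log n + 1 / Real.log n := by
    ring
  rw [abs_le] at h ⊢
  constructor <;> linarith [h.1, h.2]
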